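/- arXiv:1607.05828 — 10 statements merged into one kernel-verified Lean document; each statement's English description precedes it below -/
import Mathlib

section
/- Let n ≥ 2 be an integer, a > n − 2 a real number, b = (n−1)/(a−n+2), k ∈ ℝ, and define f : ℝⁿ → ℝ by f(x¹,…,xⁿ) = a Σ_{i=1}^{n−1} (xⁱ)² + b (xⁿ)² − 2 Σ_{1≤i<j≤n} xⁱ xʲ. Then f(x) ≥ 0 for every x = (x¹,…,xⁿ) ∈ ℝⁿ satisfying x¹ + ⋯ + xⁿ = k. -/
theorem two_mul_sum_lt_aux (n : ℕ) (x : Fin n → ℝ) :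
    2 * ∑ i : Fin n, ∑ j : Fin n, (if i < j then x i * x j else 0)
      = (∑ i, x i) ^ 2 - ∑ i, (x i) ^ 2 := by
  have h1 : (∑ i, x i) ^ 2 = ∑ i : Fin n, ∑ j : Fin n,
      ((if i < j then x i * x j else 0) + (if j < i then x j * x i else 0)
        + (if i = j then x i * x j else 0)) := by
    rw [sq, Finset.sum_mul_sum]
    refine Finset.sum_congr rfl fun i _ => Finset.sum_congr rfl fun j _ => ?_
    rcases lt_trichotomy i j with h | h | h
    · simp [h, h.not_gt, h.ne]
    · simp [h]
    · simp [h, h.not_gt, h.ne', mul_comm]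
  have h2 : ∑ i : Fin n, ∑ j : Fin n, (if j < i then x j * x i else 0)
      = ∑ i : Fin n, ∑ j : Fin n, (if i < j then x i * x j else 0) := Finset.sum_comm
  have h3 : ∑ i : Fin n, ∑ j : Fin n, (if i = j then x i * x j else 0)
      = ∑ i, (x i) ^ 2 := by
    simp [sq]
  rw [h1]
  simp only [Finset.sum_add_distrib]
  rw [h2, h3]
  ring

/-- For `a > n − 2` and `b = (n−1)/(a−n+2)`, the quadratic form
`f(x) = a Σ_{i<n} (xⁱ)² + b (xⁿ)² − 2 Σ_{i<j} xⁱxʲ` is nonnegative on the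
hyperplane `{x : Σ xⁱ = k}`. -/
theorem quadratic_form_nonneg_on_hyperplane
    (n : ℕ) (hn : 2 ≤ n) (a b k : ℝ) (ha : (n : ℝ) - 2 < a)
    (hb : b = ((n : ℝ) - 1) / (a - (n : ℝ) + 2))
    (f : (Fin n → ℝ) → ℝ)
    (hf : ∀ x : Fin n → ℝ,
      f x = a * ∑ i ∈ Finset.univ.filter (fun i : Fin n => (i : ℕ) < n - 1), (x i) ^ 2
          + b * (x ⟨n - 1, by omega⟩) ^ 2
          - 2 * ∑ i : Fin n, ∑ j : Fin n, if i < j then x i * x j else 0)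
    (x : Fin n → ℝ) (hx : ∑ i : Fin n, x i = k) :
    0 ≤ f x := by
  rw [hf, two_mul_sum_lt_aux]
  clear hf hx
  obtain ⟨m, rfl⟩ : ∃ m, n = m + 1 := ⟨n - 1, by omega⟩
  have hfil : ∑ i ∈ Finset.univ.filter (fun i : Fin (m + 1) => (i : ℕ) < m + 1 - 1), (x i) ^ 2
      = ∑ i : Fin m, (x i.castSucc) ^ 2 := by
    rw [Finset.sum_filter, Fin.sum_univ_castSucc]
    simp
  have hlast : (⟨m + 1 - 1, by omega⟩ : Fin (m + 1)) = Fin.last m := rfl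
  rw [hfil, hlast, Fin.sum_univ_castSucc, Fin.sum_univ_castSucc (fun i => (x i) ^ 2)]
  have hcs : (∑ i : Fin m, x i.castSucc) ^ 2 ≤ m * ∑ i : Fin m, (x i.castSucc) ^ 2 := by
    simpa using sq_sum_le_card_mul_sum_sq (s := Finset.univ) (f := fun i : Fin m => x i.castSucc)
  generalize (∑ i : Fin m, x i.castSucc) = S at *
  generalize (∑ i : Fin m, (x i.castSucc) ^ 2) = Q at *
  generalize x (Fin.last m) = t
  have hm : (0 : ℝ) < m := by
    have : 0 < m := by omega
    exact_mod_cast this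
  push_cast at ha hb
  obtain ⟨d, hd⟩ : ∃ d : ℝ, d = a - m + 1 := ⟨_, rfl⟩
  have hd0 : 0 < d := by linarith
  have ha' : a = d + m - 1 := by linarith
  have hb' : b = m / d := by
    rw [hb, hd]; congr 1 <;> ring
  have key : a * Q + b * t ^ 2 - ((S + t) ^ 2 - (Q + t ^ 2))
      = (d + m) / m * (m * Q - S ^ 2) + (d * S - m * t) ^ 2 / (m * d) := by
    rw [ha', hb']; field_simp; ring
  rw [key]
  have : 0 ≤ m * Q - S ^ 2 := by linarith
  positivity
end

section
/- Let n ≥ 2 be an integer, a > n − 2 a real number, b = (n−1)/(a−n+2), k ∈ ℝ, and f(x¹,…,xⁿ) = a Σ_{i=1}^{n−1} (xⁱ)² + b (xⁿ)² − 2 Σ_{1≤i<j≤n} xⁱ xʲ. Then the point x₀ given by x₀¹ = x₀² = ⋯ = x₀^{n−1} = k/(a+1) and x₀ⁿ = (a−n+2)·k/(a+1) = k/(b+1) satisfies x₀¹ + ⋯ + x₀ⁿ = k and f(x₀) = 0; hence x₀ is a global minimizer of the constrained extremum problem min f over the hyperplane {x ∈ ℝⁿ : x¹+⋯+xⁿ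 = k}. -/
theorem sq_sum_aux (n : ℕ) (x : Fin n → ℝ) :
    (∑ i, x i) ^ 2 = ∑ i, x i ^ 2
      + 2 * ∑ i : Fin n, ∑ j : Fin n, if i < j then x i * x j else 0 := by
  have h1 : ∀ i j : Fin n, x i * x j = (if i = j then x i * x j else 0)
      + (if i < j then x i * x j else 0) + (if j < i then x j * x i else 0) := by
    intro i j
    rcases lt_trichotomy i j with h | h | h
    · simp [h, h.ne, h.not_gt]
    · simp [h]
    · simp [h, h.ne', h.not_gt, mul_comm]
  rw [sq, Finset.sum_mul_sum]
  have h2 : ∑ i : Fin n, ∑ j : Fin n, x i * x j = ∑ i : Fin n, ∑ j : Fin n,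
      ((if i = j then x i * x j else 0)
      + (if i < j then x i * x j else 0) + (if j < i then x j * x i else 0)) :=
    Finset.sum_congr rfl fun i _ => Finset.sum_congr rfl fun j _ => h1 i j
  rw [h2]
  simp only [Finset.sum_add_distrib]
  have h3 : ∑ i : Fin n, ∑ j : Fin n, (if j < i then x j * x i else 0)
      = ∑ i : Fin n, ∑ j : Fin n, (if i < j then x i * x j else 0) := Finset.sum_comm
  rw [h3]
  simp [← sq]
  ring

/-- For `a > n − 2`, `b = (n−1)/(a−n+2)`, the point
`x₀ = (k/(a+1), …, k/(a+1), (a−n+2)k/(a+1))` lies on the hyperplane `{Σ xⁱ = k}`,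
its last coordinate also equals `k/(b+1)`, it satisfies `f(x₀) = 0`, and it is a
global minimizer of `f` over the hyperplane. -/
theorem quadratic_form_global_minimizer
    (n : ℕ) (hn : 2 ≤ n) (a b k : ℝ) (ha : (n : ℝ) - 2 < a)
    (hb : b = ((n : ℝ) - 1) / (a - (n : ℝ) + 2))
    (f : (Fin n → ℝ) → ℝ)
    (hf : ∀ x : Fin n → ℝ,
      f x = a * ∑ i ∈ Finset.univ.filter (fun i : Fin n => (i : ℕ) < n - 1), (x i) ^ 2
          + b * (x ⟨n - 1, by omega⟩) ^ 2
          - 2 * ∑ i : Fin n, ∑ j : Fin n, if i < j then x i * x j else 0)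
    (x₀ : Fin n → ℝ)
    (hx₀ : ∀ i : Fin n, x₀ i =
      if (i : ℕ) < n - 1 then k / (a + 1) else (a - (n : ℝ) + 2) * k / (a + 1)) :
    (a - (n : ℝ) + 2) * k / (a + 1) = k / (b + 1) ∧
    (∑ i : Fin n, x₀ i = k) ∧
    f x₀ = 0 ∧
    (∀ x : Fin n → ℝ, (∑ i : Fin n, x i = k) → f x₀ ≤ f x) := by
  obtain ⟨m, rfl⟩ : ∃ m, n = m + 1 := ⟨n - 1, by omega⟩
  have hlast : (⟨m + 1 - 1, by omega⟩ : Fin (m + 1)) = Fin.last m := rfl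
  have key : ∀ x : Fin (m + 1) → ℝ, f x = (a + 1) * ∑ i : Fin m, x i.castSucc ^ 2
      + (b + 1) * x (Fin.last m) ^ 2 - (∑ i, x i) ^ 2 := by
    intro x
    rw [hf, sq_sum_aux, hlast, Finset.sum_filter, Fin.sum_univ_castSucc,
      Fin.sum_univ_castSucc (fun i => x i ^ 2)]
    simp
    ring
  push_cast at ha hb hx₀ ⊢
  have hm : (1 : ℝ) ≤ m := by exact_mod_cast (by omega : 1 ≤ m)
  have hd : 0 < a - (m + 1) + 2 := by linarith
  have ha1 : 0 < a + 1 := by linarith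
  have hb1 : b + 1 = (a + 1) / (a - (m + 1) + 2) := by
    rw [hb]; field_simp; ring
  have hxc : ∀ i : Fin m, x₀ i.castSucc = k / (a + 1) := by
    intro i; rw [hx₀]; simp
  have hxl : x₀ (Fin.last m) = (a - (m + 1) + 2) * k / (a + 1) := by
    rw [hx₀]; simp
  have hsum : ∑ i, x₀ i = k := by
    rw [Fin.sum_univ_castSucc, hxl]
    simp only [hxc, Finset.sum_const, Finset.card_univ, Fintype.card_fin, nsmul_eq_mul]
    field_simp; ring
  have hf0 : f x₀ = 0 := by
    rw [key, hsum, hxl, hb1]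
    simp only [hxc, Finset.sum_const, Finset.card_univ, Fintype.card_fin, nsmul_eq_mul]
    field_simp; ring
  refine ⟨?_, hsum, hf0, ?_⟩
  · rw [hb1]; field_simp
  · intro x hx
    rw [hf0, key, hx]
    rw [Fin.sum_univ_castSucc] at hx
    have hT : (a + 1) * ∑ i : Fin m, x i.castSucc ^ 2 - 2 * k * ∑ i : Fin m, x i.castSucc
        + m * (k ^ 2 / (a + 1)) = (a + 1) * ∑ i : Fin m, (x i.castSucc - k / (a + 1)) ^ 2 := by
      have : ∀ i : Fin m, (x i.castSucc - k / (a + 1)) ^ 2 = x i.castSucc ^ 2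
          - 2 * (k / (a + 1)) * x i.castSucc + (k / (a + 1)) ^ 2 := fun i => by ring
      simp only [this, Finset.sum_add_distrib, Finset.sum_sub_distrib, ← Finset.mul_sum,
        Finset.sum_const, Finset.card_univ, Fintype.card_fin, nsmul_eq_mul]
      field_simp
    have hT0 : 0 ≤ (a + 1) * ∑ i : Fin m, (x i.castSucc - k / (a + 1)) ^ 2 :=
      mul_nonneg ha1.le (Finset.sum_nonneg fun i _ => sq_nonneg _)
    have hy : (b + 1) * x (Fin.last m) ^ 2 - 2 * k * x (Fin.last m)
        + (a - (m + 1) + 2) * (k ^ 2 / (a + 1))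
        = (b + 1) * (x (Fin.last m) - (a - (m + 1) + 2) * k / (a + 1)) ^ 2 := by
      rw [hb1]; field_simp; ring
    have hy0 : 0 ≤ (b + 1) * (x (Fin.last m) - (a - (m + 1) + 2) * k / (a + 1)) ^ 2 := by
      rw [hb1]; positivity
    have hk : (m : ℝ) * (k ^ 2 / (a + 1)) + (a - (m + 1) + 2) * (k ^ 2 / (a + 1)) = k ^ 2 := by
      field_simp; ring
    have hkk : 2 * k * ∑ i : Fin m, x i.castSucc + 2 * k * x (Fin.last m) = 2 * k ^ 2 := by
      rw [← mul_add, hx]; ring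
    linarith
end

section
/- Let n ≥ 2 be an integer, a > n − 2 a real number, b = (n−1)/(a−n+2), k ∈ ℝ, and f(x¹,…,xⁿ) = a Σ_{i=1}^{n−1} (xⁱ)² + b (xⁿ)² − 2 Σ_{1≤i<j≤n} xⁱ xʲ. Then for x ∈ ℝⁿ with x¹ + ⋯ + xⁿ = k, one has f(x) = 0 if and only if x¹ = x² = ⋯ = x^{n−1} = k/(a+1) and xⁿ = (a−n+2)·k/(a+1). -/
theorem double_sum_aux (m : ℕ) (x : Fin m → ℝ) :
    2 * ∑ i : Fin m, ∑ j : Fin m, (if i < j then x i * x j else 0)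
      = (∑ i, x i) ^ 2 - ∑ i, (x i) ^ 2 := by
  induction m with
  | zero => simp
  | succ m ih =>
    have h := ih (fun i => x i.castSucc)
    have h0 : ∀ j : Fin m, ¬ (Fin.last m < j.castSucc) := fun j =>
      not_lt.mpr (Fin.le_last _)
    simp only [Fin.sum_univ_castSucc, Fin.castSucc_lt_castSucc_iff, Fin.castSucc_lt_last,
      if_true, h0, if_false, lt_irrefl, Finset.sum_const_zero, Finset.sum_add_distrib,
      ← Finset.sum_mul]
    linear_combination h

/-- For `a > n − 2`, `b = (n−1)/(a−n+2)` and `x` on the hyperplane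
`{Σ xⁱ = k}`, one has `f(x) = 0` iff `x¹ = ⋯ = x^{n−1} = k/(a+1)` and
`xⁿ = (a−n+2)k/(a+1)`. -/
theorem quadratic_form_zero_iff
    (n : ℕ) (hn : 2 ≤ n) (a b k : ℝ) (ha : (n : ℝ) - 2 < a)
    (hb : b = ((n : ℝ) - 1) / (a - (n : ℝ) + 2))
    (f : (Fin n → ℝ) → ℝ)
    (hf : ∀ x : Fin n → ℝ,
      f x = a * ∑ i ∈ Finset.univ.filter (fun i : Fin n => (i : ℕ) < n - 1), (x i) ^ 2
          + b * (x ⟨n - 1, by omega⟩) ^ 2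
          - 2 * ∑ i : Fin n, ∑ j : Fin n, if i < j then x i * x j else 0)
    (x : Fin n → ℝ) (hx : ∑ i : Fin n, x i = k) :
    f x = 0 ↔
      ((∀ i : Fin n, (i : ℕ) < n - 1 → x i = k / (a + 1)) ∧
        x ⟨n - 1, by omega⟩ = (a - (n : ℝ) + 2) * k / (a + 1)) := by
  obtain ⟨m, rfl⟩ : ∃ m, n = m + 1 := ⟨n - 1, by omega⟩
  have hlast : (⟨m + 1 - 1, by omega⟩ : Fin (m + 1)) = Fin.last m := rfl
  have hm : (1 : ℝ) ≤ m := by exact_mod_cast (by omega : 1 ≤ m)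
  push_cast at ha hb
  have hd : 0 < a - (m : ℝ) + 1 := by linarith
  have ha1 : 0 < a + 1 := by linarith
  have hb' : b = (m : ℝ) / (a - m + 1) := by
    rw [hb]; congr 1 <;> ring
  have hS : ∑ i ∈ Finset.univ.filter (fun i : Fin (m + 1) => (i : ℕ) < m + 1 - 1), (x i) ^ 2
      = ∑ i : Fin m, (x i.castSucc) ^ 2 := by
    rw [Finset.sum_filter, Fin.sum_univ_castSucc]
    simp
  have key : f x = (a + 1) * (∑ i : Fin m, (x i.castSucc - k / (a + 1)) ^ 2
      + (x (Fin.last m) - (a - m + 1) * k / (a + 1)) ^ 2 / (a - m + 1)) := by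
    rw [hf, hS, hlast, double_sum_aux, hx, hb']
    rw [Fin.sum_univ_castSucc] at hx ⊢
    have e : ∑ i : Fin m, (x i.castSucc - k / (a + 1)) ^ 2
        = ∑ i : Fin m, (x i.castSucc) ^ 2 - 2 * (k / (a + 1)) * (k - x (Fin.last m))
          + m * (k / (a + 1)) ^ 2 := by
      have : ∑ i : Fin m, x i.castSucc = k - x (Fin.last m) := by linarith
      rw [← this, Finset.mul_sum, ← Finset.sum_sub_distrib]
      have h2 : (m : ℝ) * (k / (a + 1)) ^ 2 = ∑ _i : Fin m, (k / (a + 1)) ^ 2 := by simp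
      rw [h2, ← Finset.sum_add_distrib]
      exact Finset.sum_congr rfl fun i _ => by ring
    rw [e]
    field_simp
    ring
  have hcast : a - ((m + 1 : ℕ) : ℝ) + 2 = a - m + 1 := by push_cast; ring
  rw [hlast, hcast, key]
  have n1 : 0 ≤ ∑ i : Fin m, (x i.castSucc - k / (a + 1)) ^ 2 :=
    Finset.sum_nonneg fun i _ => sq_nonneg _
  have n2 : 0 ≤ (x (Fin.last m) - (a - m + 1) * k / (a + 1)) ^ 2 / (a - m + 1) := by positivity
  rw [mul_eq_zero, or_iff_right ha1.ne', add_eq_zero_iff_of_nonneg n1 n2,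
    Finset.sum_eq_zero_iff_of_nonneg (fun i _ => sq_nonneg _), div_eq_zero_iff,
    or_iff_left hd.ne', sq_eq_zero_iff, sub_eq_zero]
  refine and_congr_left fun _ => ⟨fun h i hi => ?_, fun h i _ => ?_⟩
  · have := h ⟨i, by omega⟩ (Finset.mem_univ _)
    exact sub_eq_zero.mp (sq_eq_zero_iff.mp this)
  · rw [h i.castSucc (by simp)]; simp
end

section
/- Let n ≥ 2 be an integer, r > 0 a real number, and set a(r) = (n−1)(n+r)(n²−n−r)/(nr). Let W be a real inner product space and let ζ_{ij} ∈ W for i,j ∈ {1,…,n} satisfy ζ_{ij} = ζ_{ji}. Then ((n+r)/n) Σ_{i,j=1}^n ‖ζ_{ij}‖² + (a(r)/(n−1)) Σ_{i,j=1}^{n−1} ‖ζ_{ij}‖² ≥ ‖Σ_{i=1}^n ζ_{ii}‖². -/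
/-- For a symmetric array `(ζ_{ij})` of vectors in a real inner product
space and `a(r) = (n−1)(n+r)(n²−n−r)/(nr)`,
`((n+r)/n) Σ_{i,j≤n} ‖ζ_{ij}‖² + (a(r)/(n−1)) Σ_{i,j≤n−1} ‖ζ_{ij}‖² ≥ ‖Σ_i ζ_{ii}‖²`. -/
theorem casorati_vector_inequality
    {W : Type*} [NormedAddCommGroup W] [InnerProductSpace ℝ W]
    (n : ℕ) (hn : 2 ≤ n) (r : ℝ) (hr : 0 < r)
    (ζ : Fin n → Fin n → W) (hζ : ∀ i j : Fin n, ζ i j = ζ j i) :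
    ‖∑ i : Fin n, ζ i i‖ ^ 2 ≤
      (((n : ℝ) + r) / (n : ℝ)) * ∑ i : Fin n, ∑ j : Fin n, ‖ζ i j‖ ^ 2
      + ((((n : ℝ) - 1) * ((n : ℝ) + r) * ((n : ℝ) ^ 2 - (n : ℝ) - r) / ((n : ℝ) * r))
            / ((n : ℝ) - 1)) *
          ∑ i ∈ Finset.univ.filter (fun i : Fin n => (i : ℕ) < n - 1),
            ∑ j ∈ Finset.univ.filter (fun j : Fin n => (j : ℕ) < n - 1),
              ‖ζ i j‖ ^ 2 := by
  obtain ⟨m, rfl⟩ : ∃ m, n = m + 1 := ⟨n - 1, by omega⟩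
  have hm : (1 : ℝ) ≤ m := by exact_mod_cast (by omega : 1 ≤ m)
  have hfil : ∀ f : Fin (m + 1) → ℝ,
      ∑ i ∈ Finset.univ.filter (fun i : Fin (m + 1) => (i : ℕ) < m + 1 - 1), f i
        = ∑ i : Fin m, f i.castSucc := by
    intro f
    rw [Finset.sum_filter, Fin.sum_univ_castSucc]
    simp
  simp only [hfil]
  set Q : ℝ := ∑ i : Fin m, ∑ j : Fin m, ‖ζ i.castSucc j.castSucc‖ ^ 2 with hQ
  set D : ℝ := ∑ i : Fin m, ‖ζ i.castSucc i.castSucc‖ ^ 2 with hD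
  set z : W := ζ (Fin.last m) (Fin.last m) with hz
  set S : W := ∑ i : Fin m, ζ i.castSucc i.castSucc with hS
  set T : ℝ := ∑ i : Fin (m + 1), ∑ j : Fin (m + 1), ‖ζ i j‖ ^ 2 with hT
  have hDQ : D ≤ Q := by
    apply Finset.sum_le_sum
    intro i _
    exact Finset.single_le_sum (f := fun j : Fin m => ‖ζ i.castSucc j.castSucc‖ ^ 2)
      (fun j _ => sq_nonneg _) (Finset.mem_univ i)
  have hTQ : Q + ‖z‖ ^ 2 ≤ T := by
    rw [hT, Fin.sum_univ_castSucc]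
    apply add_le_add
    · apply Finset.sum_le_sum
      intro i _
      rw [Fin.sum_univ_castSucc]
      exact le_add_of_nonneg_right (sq_nonneg _)
    · exact Finset.single_le_sum (f := fun j : Fin (m + 1) => ‖ζ (Fin.last m) j‖ ^ 2)
        (fun j _ => sq_nonneg _) (Finset.mem_univ (Fin.last m))
  have hSD : ‖S‖ ^ 2 ≤ m * D := by
    have h1 : ‖S‖ ≤ ∑ i : Fin m, ‖ζ i.castSucc i.castSucc‖ := norm_sum_le _ _
    have h2 := sq_sum_le_card_mul_sum_sq (s := (Finset.univ : Finset (Fin m)))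
      (f := fun i => ‖ζ i.castSucc i.castSucc‖)
    have h3 : ‖S‖ ^ 2 ≤ (∑ i : Fin m, ‖ζ i.castSucc i.castSucc‖) ^ 2 := by gcongr
    simp only [Finset.card_univ, Fintype.card_fin] at h2
    exact h3.trans h2
  rw [Fin.sum_univ_castSucc]
  have hN : ‖S + z‖ ^ 2 ≤ (‖S‖ + ‖z‖) ^ 2 := by
    gcongr
    exact norm_add_le _ _
  push_cast
  have hm0 : (0 : ℝ) < m := by linarith
  set x : ℝ := (m : ℝ) with hx
  have hY : (‖S‖ + ‖z‖) ^ 2 ≤ (x + 1 + r) / r * ‖S‖ ^ 2 + (x + 1 + r) / (x + 1) * ‖z‖ ^ 2 := by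
    have : (x + 1 + r) / r * ‖S‖ ^ 2 + (x + 1 + r) / (x + 1) * ‖z‖ ^ 2 - (‖S‖ + ‖z‖) ^ 2
        = ((x + 1) * ‖S‖ - r * ‖z‖) ^ 2 / (r * (x + 1)) := by
      field_simp
      ring
    have h2 : 0 ≤ ((x + 1) * ‖S‖ - r * ‖z‖) ^ 2 / (r * (x + 1)) := by positivity
    linarith
  have hb : (x + 1 - 1) * (x + 1 + r) * ((x + 1) ^ 2 - (x + 1) - r) / ((x + 1) * r) / (x + 1 - 1)
      = (x + 1 + r) / r * x - (x + 1 + r) / (x + 1) := by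
    rw [add_sub_cancel_right]
    field_simp
    ring
  rw [hb]
  have hc : 0 ≤ (x + 1 + r) / (x + 1) := by positivity
  have hd : 0 ≤ (x + 1 + r) / r := by positivity
  have e1 := mul_le_mul_of_nonneg_left hTQ hc
  have e2 := mul_le_mul_of_nonneg_left (hSD.trans (mul_le_mul_of_nonneg_left hDQ hm0.le)) hd
  have e3 : ‖S + z‖ ^ 2 ≤ _ := hN.trans hY
  refine e3.trans ?_
  linarith
end

section
/- Let n ≥ 2 be an integer, r > 0 a real number, a(r) = (n−1)(n+r)(n²−n−r)/(nr), W a real inner product space, and ζ_{ij} ∈ W (i,j ∈ {1,…,n}) with ζ_{ij} = ζ_{ji}. Then equality ((n+r)/n) Σ_{i,j=1}^n ‖ζ_{ij}‖² + (a(r)/(n−1)) Σ_{i,j=1}^{n−1} ‖ζ_{ij}‖² = ‖Σ_{i=1}^n ζ_{ii}‖² holds if and only if ζ_{ij} = 0 for all i ≠ j and ζ_{11} = ζ_{22} = ⋯ = ζ_{n−1,n−1} = (r/(n(n−1))) ζ_{nn}. -/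
theorem casorati_weighted_aux {W ι : Type*} [Fintype ι] [DecidableEq ι]
    [NormedAddCommGroup W] [InnerProductSpace ℝ W]
    (a : ι → ι → ℝ) (ha : ∀ i j, 0 < a i j) (hs : ∑ i, (a i i)⁻¹ = 1) (ζ : ι → ι → W) :
    (∑ i, ∑ j, a i j * ‖ζ i j‖ ^ 2 = ‖∑ i, ζ i i‖ ^ 2) ↔
      ∀ i j, ζ i j = if i = j then (a i i)⁻¹ • ∑ k, ζ k k else 0 := by
  set T := ∑ k, ζ k k with hT
  have key : ∑ i, ∑ j, a i j * ‖ζ i j - if i = j then (a i i)⁻¹ • T else 0‖ ^ 2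
      = ∑ i, ∑ j, a i j * ‖ζ i j‖ ^ 2 - ‖T‖ ^ 2 := by
    have h1 : ∀ i j, a i j * ‖ζ i j - if i = j then (a i i)⁻¹ • T else 0‖ ^ 2
        = a i j * ‖ζ i j‖ ^ 2 +
          if i = j then (-2 * inner ℝ (ζ i i) T + (a i i)⁻¹ * ‖T‖ ^ 2) else 0 := by
      intro i j
      by_cases h : i = j
      · subst h
        have := (ha i i).ne'
        simp only [if_true]
        rw [norm_sub_sq_real, inner_smul_right, norm_smul, mul_pow, Real.norm_eq_abs, sq_abs]
        field_simp
        ring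
      · simp [h]
    simp_rw [h1, Finset.sum_add_distrib, Finset.sum_ite_eq, Finset.mem_univ, if_true]
    rw [Finset.sum_add_distrib, ← Finset.sum_mul, hs, ← Finset.mul_sum, ← sum_inner, ← hT,
      real_inner_self_eq_norm_sq]
    ring
  have nn : ∀ i j, 0 ≤ a i j * ‖ζ i j - if i = j then (a i i)⁻¹ • T else 0‖ ^ 2 :=
    fun i j => mul_nonneg (ha i j).le (sq_nonneg _)
  rw [← sub_eq_zero, ← key, Finset.sum_eq_zero_iff_of_nonneg
    (fun i _ => Finset.sum_nonneg fun j _ => nn i j)]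
  constructor
  · intro h i j
    have h2 := (Finset.sum_eq_zero_iff_of_nonneg (fun j _ => nn i j)).1
      (h i (Finset.mem_univ _)) j (Finset.mem_univ _)
    rcases mul_eq_zero.1 h2 with h3 | h3
    · exact absurd h3 (ha i j).ne'
    · exact sub_eq_zero.1 (norm_eq_zero.1 (pow_eq_zero_iff two_ne_zero |>.1 h3))
  · intro h i _
    refine Finset.sum_eq_zero fun j _ => ?_
    rw [sub_eq_zero.2 (h i j)]
    simp

/-- Equality in the Casorati vector inequality holds iff `ζ_{ij} = 0`
for `i ≠ j` and `ζ_{11} = ⋯ = ζ_{n−1,n−1} = (r/(n(n−1))) ζ_{nn}`. -/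
theorem casorati_vector_equality_iff
    {W : Type*} [NormedAddCommGroup W] [InnerProductSpace ℝ W]
    (n : ℕ) (hn : 2 ≤ n) (r : ℝ) (hr : 0 < r)
    (ζ : Fin n → Fin n → W) (hζ : ∀ i j : Fin n, ζ i j = ζ j i) :
    ((((n : ℝ) + r) / (n : ℝ)) * ∑ i : Fin n, ∑ j : Fin n, ‖ζ i j‖ ^ 2
      + ((((n : ℝ) - 1) * ((n : ℝ) + r) * ((n : ℝ) ^ 2 - (n : ℝ) - r) / ((n : ℝ) * r))
            / ((n : ℝ) - 1)) *
          ∑ i ∈ Finset.univ.filter (fun i : Fin n => (i : ℕ) < n - 1),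
            ∑ j ∈ Finset.univ.filter (fun j : Fin n => (j : ℕ) < n - 1),
              ‖ζ i j‖ ^ 2
      = ‖∑ i : Fin n, ζ i i‖ ^ 2) ↔
    ((∀ i j : Fin n, i ≠ j → ζ i j = 0) ∧
      (∀ i : Fin n, (i : ℕ) < n - 1 →
        ζ i i = (r / ((n : ℝ) * ((n : ℝ) - 1))) •
          ζ ⟨n - 1, by omega⟩ ⟨n - 1, by omega⟩)) := by
  obtain ⟨m, rfl⟩ : ∃ m, n = m + 1 := ⟨n - 1, by omega⟩
  have hm : (0 : ℝ) < m := by exact_mod_cast (by omega : 0 < m)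
  simp only [Nat.add_sub_cancel]
  push_cast
  have hm1 : (0 : ℝ) < (m : ℝ) + 1 := by positivity
  have hC : (m + 1 + r) / (m + 1) + (((m : ℝ) + 1 - 1) * ((m : ℝ) + 1 + r) *
      (((m : ℝ) + 1) ^ 2 - ((m : ℝ) + 1) - r) / (((m : ℝ) + 1) * r)) / ((m : ℝ) + 1 - 1)
      = (m + 1 + r) * m / r := by
    rw [add_sub_cancel_right]
    field_simp
    ring
  set A : ℝ := (m + 1 + r) / (m + 1) with hA
  set B : ℝ := (((m : ℝ) + 1 - 1) * ((m : ℝ) + 1 + r) *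
      (((m : ℝ) + 1) ^ 2 - ((m : ℝ) + 1) - r) / (((m : ℝ) + 1) * r)) / ((m : ℝ) + 1 - 1)
  have hApos : 0 < A := by positivity
  have hCpos : 0 < A + B := by rw [hC]; positivity
  let a : Fin (m + 1) → Fin (m + 1) → ℝ := fun i j =>
    A + if (i : ℕ) < m then (if (j : ℕ) < m then B else 0) else 0
  have ha : ∀ i j, 0 < a i j := by
    intro i j
    simp only [a]
    split_ifs <;> simpa
  have hlast : (⟨m, by omega⟩ : Fin (m + 1)) = Fin.last m := rfl
  have haL : a (Fin.last m) (Fin.last m) = A := by simp [a]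
  have haC : ∀ i : Fin (m + 1), (i : ℕ) < m → a i i = A + B := by
    intro i hi
    simp [a, hi]
  have hs : ∑ i, (a i i)⁻¹ = 1 := by
    rw [Fin.sum_univ_castSucc, haL,
      Finset.sum_congr rfl (fun i _ => by rw [haC (Fin.castSucc i) (by simp)])]
    rw [hC, hA]
    simp
    field_simp
    ring
  have hL : A * ∑ i : Fin (m + 1), ∑ j : Fin (m + 1), ‖ζ i j‖ ^ 2
      + B * ∑ i ∈ Finset.univ.filter (fun i : Fin (m + 1) => (i : ℕ) < m),
            ∑ j ∈ Finset.univ.filter (fun j : Fin (m + 1) => (j : ℕ) < m), ‖ζ i j‖ ^ 2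
      = ∑ i, ∑ j, a i j * ‖ζ i j‖ ^ 2 := by
    simp_rw [Finset.sum_filter, Finset.mul_sum, ← Finset.sum_add_distrib]
    refine Finset.sum_congr rfl fun i _ => ?_
    by_cases hi : (i : ℕ) < m
    · simp only [hi, if_true, a, Finset.mul_sum, ← Finset.sum_add_distrib]
      refine Finset.sum_congr rfl fun j _ => ?_
      split_ifs <;> ring
    · simp [hi, a]
  rw [hL, casorati_weighted_aux a ha hs ζ, hlast, add_sub_cancel_right]
  have hc : (A + B)⁻¹ * A = r / ((m + 1) * m) := by
    rw [hC, hA]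
    field_simp
  constructor
  · intro h
    refine ⟨fun i j hij => by rw [h i j, if_neg hij], fun i hi => ?_⟩
    have h1 := h i i
    have h2 := h (Fin.last m) (Fin.last m)
    rw [if_pos rfl, haC i hi] at h1
    rw [if_pos rfl, haL] at h2
    rw [h1, h2, smul_smul, ← hc, mul_assoc, mul_inv_cancel₀ hApos.ne', mul_one]
  · rintro ⟨h0, h1⟩ i j
    have hT : ∑ k, ζ k k = A • ζ (Fin.last m) (Fin.last m) := by
      rw [Fin.sum_univ_castSucc,
        Finset.sum_congr rfl (fun i _ => h1 (Fin.castSucc i) (by simp))]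
      rw [Finset.sum_const, Finset.card_univ, Fintype.card_fin, ← Nat.cast_smul_eq_nsmul ℝ,
        smul_smul]
      nth_rewrite 2 [← one_smul ℝ (ζ (Fin.last m) (Fin.last m))]
      rw [← add_smul]
      congr 1
      rw [hA]
      field_simp
      ring
    by_cases hij : i = j
    · subst hij
      rw [if_pos rfl, hT, smul_smul]
      by_cases hi : (i : ℕ) < m
      · rw [haC i hi, hc]
        exact h1 i hi
      · have : i = Fin.last m := Fin.ext (by simp; omega)
        rw [this, haL, inv_mul_cancel₀ hApos.ne', one_smul]
    · rw [if_neg hij]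
      exact h0 i j hij
end

section
/- Let V be an n-dimensional real inner product space (n ≥ 2), W a real inner product space, ζ : V × V → W a symmetric bilinear map, and T the tensor defined by the algebraic Gauss equation. Let r be a real number with r > n(n−1) and a(r) = (n−1)(n+r)(n²−n−r)/(nr) (so a(r) < 0). Then for every orthonormal basis (e_1,…,e_n) of V, writing ζ_{ij} = ζ(e_i,e_j), τ_T = Σ_{1≤i<j≤n} T(e_i,e_j,e_j,e_i), C^{T,ζ} = (1/n) Σ_{i,j=1}^n ‖ζ_{ij}‖², and C^{T,ζ}(Π_{n−1}) = (1/(n−1)) Σ_{i,j=1}^{n−1} ‖ζ_{ij}‖² for the hyperplane Π_{n−1} spanned by e_1,…,e_{n−1}, one has 2τ_T/(n(n−1)) ≤ (1/(n(n−1))) ( r · C^{T,ζ} + a(r) · C^{T,ζ}(Π_{n−1}) ). In particular, the T-normalized scalar curvature is bounded above by (1/(n(n−1))) times the algebraic Casorati curvature δ̂_{C^{T,ζ}}(r;n−1) = r·C^{T,ζ} + a(r)·sup over hyperplanes of C^{T,ζ}(Π_{n−1}). -/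
open RealInnerProductSpace

/-- STATEMENT 9: For `r > n(n−1)` and any orthonormal basis, the normalized
`T`-scalar curvature is bounded by `(1/(n(n−1)))(r·C^{T,ζ} + a(r)·C^{T,ζ}(P_{n−1}))`,
where `P_{n−1}` is the hyperplane spanned by `e_1,…,e_{n−1}`. -/
theorem algebraic_casorati_inequality_large_r
    {V W : Type*} [NormedAddCommGroup V] [InnerProductSpace ℝ V]
    [FiniteDimensional ℝ V] [NormedAddCommGroup W] [InnerProductSpace ℝ W]
    (n : ℕ) (hn : 2 ≤ n) (e : OrthonormalBasis (Fin n) ℝ V)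
    (ζ : V →ₗ[ℝ] V →ₗ[ℝ] W) (hζ : ∀ X Y : V, ζ X Y = ζ Y X)
    (T : V → V → V → V → ℝ)
    (hT : ∀ X Y Z W' : V, T X Y Z W' = ⟪ζ X W', ζ Y Z⟫ - ⟪ζ X Z, ζ Y W'⟫)
    (r : ℝ) (hr0 : 0 < r) (hr1 : (n : ℝ) * ((n : ℝ) - 1) < r)
    (τ C CP : ℝ)
    (hτ : τ = ∑ i : Fin n, ∑ j : Fin n,
        if i < j then T (e i) (e j) (e j) (e i) else 0)
    (hC : C = (1 / (n : ℝ)) * ∑ i : Fin n, ∑ j : Fin n, ‖ζ (e i) (e j)‖ ^ 2)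
    (hCP : CP = (1 / ((n : ℝ) - 1)) *
        ∑ i ∈ Finset.univ.filter (fun i : Fin n => (i : ℕ) < n - 1),
          ∑ j ∈ Finset.univ.filter (fun j : Fin n => (j : ℕ) < n - 1),
            ‖ζ (e i) (e j)‖ ^ 2) :
    2 * τ / ((n : ℝ) * ((n : ℝ) - 1)) ≤
      (1 / ((n : ℝ) * ((n : ℝ) - 1))) *
        (r * C +
          (((n : ℝ) - 1) * ((n : ℝ) + r) * ((n : ℝ) ^ 2 - (n : ℝ) - r) / ((n : ℝ) * r))
            * CP) := by
  obtain ⟨m, rfl⟩ : ∃ m, n = m + 1 := ⟨n - 1, by omega⟩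
  have hm : (1 : ℝ) ≤ m := by exact_mod_cast (by omega : 1 ≤ m)
  have hm0 : (0 : ℝ) < m := by linarith
  set z : Fin (m + 1) → Fin (m + 1) → W := fun i j => ζ (e i) (e j) with hz
  set K : W := ∑ i : Fin m, z i.castSucc i.castSucc with hK
  set Z : W := z (Fin.last m) (Fin.last m) with hZ
  set S : ℝ := ∑ i : Fin (m + 1), ∑ j : Fin (m + 1), ‖z i j‖ ^ 2 with hS
  set P : ℝ := ∑ i : Fin m, ∑ j : Fin m, ‖z i.castSucc j.castSucc‖ ^ 2 with hP
  have hC2 : C = 1 / ((m : ℝ) + 1) * S := by rw [hC]; push_cast; rfl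
  have hCP2 : CP = 1 / (m : ℝ) * P := by
    rw [hCP]
    push_cast
    simp only [Finset.sum_filter, Fin.sum_univ_castSucc, add_sub_cancel_right]
    simp [hP, hz]
  have h2τ : 2 * τ = ‖K + Z‖ ^ 2 - S := by
    have hH : K + Z = ∑ i : Fin (m + 1), z i i := by
      rw [Fin.sum_univ_castSucc]
    have e1 : ∑ i : Fin (m + 1), ∑ j : Fin (m + 1), (⟪z i i, z j j⟫ - ‖z i j‖ ^ 2)
        = ‖K + Z‖ ^ 2 - S := by
      simp only [Finset.sum_sub_distrib]
      rw [hH, ← real_inner_self_eq_norm_sq, sum_inner]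
      simp only [inner_sum]
      rfl
    rw [← e1, two_mul]
    have e2 : τ = ∑ i : Fin (m + 1), ∑ j : Fin (m + 1),
        if i < j then (⟪z i i, z j j⟫ - ‖z i j‖ ^ 2) else 0 := by
      rw [hτ]
      refine Finset.sum_congr rfl fun i _ => Finset.sum_congr rfl fun j _ => ?_
      rw [hT, hζ (e j) (e i), real_inner_self_eq_norm_sq]
    have e3 : τ = ∑ i : Fin (m + 1), ∑ j : Fin (m + 1),
        if j < i then (⟪z i i, z j j⟫ - ‖z i j‖ ^ 2) else 0 := by
      rw [e2, Finset.sum_comm]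
      refine Finset.sum_congr rfl fun i _ => Finset.sum_congr rfl fun j _ => ?_
      have : z j i = z i j := hζ _ _
      rw [this, real_inner_comm]
    nth_rewrite 1 [e2]
    rw [e3, ← Finset.sum_add_distrib]
    refine Finset.sum_congr rfl fun i _ => ?_
    rw [← Finset.sum_add_distrib]
    refine Finset.sum_congr rfl fun j _ => ?_
    rcases lt_trichotomy i j with h | h | h
    · simp [h, h.not_gt]
    · subst h
      simp
    · simp [h, h.not_gt]
  have hSP : P + ‖Z‖ ^ 2 ≤ S := by
    rw [hS, Fin.sum_univ_castSucc]
    refine add_le_add (Finset.sum_le_sum fun i _ => ?_) ?_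
    · rw [Fin.sum_univ_castSucc]
      have := sq_nonneg ‖z i.castSucc (Fin.last m)‖
      linarith
    · exact Finset.single_le_sum (f := fun j => ‖z (Fin.last m) j‖ ^ 2)
        (fun _ _ => sq_nonneg _) (Finset.mem_univ (Fin.last m))
  have hKP : ‖K‖ ^ 2 ≤ m * P := by
    have h1 : ‖K‖ ≤ ∑ i : Fin m, ‖z i.castSucc i.castSucc‖ := norm_sum_le _ _
    have h2 := sq_sum_le_card_mul_sum_sq (s := (Finset.univ : Finset (Fin m)))
      (f := fun i => ‖z i.castSucc i.castSucc‖)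
    rw [Finset.card_univ, Fintype.card_fin] at h2
    have h3 : ∑ i : Fin m, ‖z i.castSucc i.castSucc‖ ^ 2 ≤ P :=
      Finset.sum_le_sum fun i _ =>
        Finset.single_le_sum (f := fun j : Fin m => ‖z i.castSucc j.castSucc‖ ^ 2)
          (fun _ _ => sq_nonneg _) (Finset.mem_univ i)
    calc ‖K‖ ^ 2 ≤ (∑ i : Fin m, ‖z i.castSucc i.castSucc‖) ^ 2 := by gcongr
      _ ≤ _ := h2
      _ ≤ _ := by gcongr
  have hKZ : ‖K + Z‖ ^ 2 ≤ (‖K‖ + ‖Z‖) ^ 2 := by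
    gcongr
    exact norm_add_le _ _
  have hN : (0 : ℝ) < (m : ℝ) + 1 := by linarith
  rw [h2τ, hC2, hCP2]
  push_cast
  rw [div_eq_mul_one_div, mul_comm]
  refine mul_le_mul_of_nonneg_left ?_ (by simp only [add_sub_cancel_right]; positivity)
  generalize ‖K‖ = k at *
  generalize ‖Z‖ = w at *
  have key : (k + w) ^ 2 ≤ (((m : ℝ) + 1 + r) / r) * k ^ 2
      + (((m : ℝ) + 1 + r) / ((m : ℝ) + 1)) * w ^ 2 := by
    have : (((m : ℝ) + 1 + r) / r) * k ^ 2 + (((m : ℝ) + 1 + r) / ((m : ℝ) + 1)) * w ^ 2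
        - (k + w) ^ 2 = (((m : ℝ) + 1) * k - r * w) ^ 2 / (r * ((m : ℝ) + 1)) := by
      field_simp
      ring
    have h0 : 0 ≤ (((m : ℝ) + 1) * k - r * w) ^ 2 / (r * ((m : ℝ) + 1)) := by positivity
    linarith
  have h1 : (((m : ℝ) + 1 + r) / r) * k ^ 2 ≤ (((m : ℝ) + 1 + r) / r) * (m * P) := by
    gcongr
  have h2 : (((m : ℝ) + 1 + r) / ((m : ℝ) + 1)) * (P + w ^ 2)
      ≤ (((m : ℝ) + 1 + r) / ((m : ℝ) + 1)) * S := by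
    gcongr
  have h3 : r * (1 / ((m : ℝ) + 1) * S) + ((m : ℝ) + 1 - 1) * ((m : ℝ) + 1 + r) *
      (((m : ℝ) + 1) ^ 2 - ((m : ℝ) + 1) - r) / (((m : ℝ) + 1) * r) * (1 / (m : ℝ) * P)
      = (((m : ℝ) + 1 + r) / ((m : ℝ) + 1)) * S - S + (((m : ℝ) + 1 + r) / r) * (m * P)
        - (((m : ℝ) + 1 + r) / ((m : ℝ) + 1)) * P := by
    field_simp
    ring
  rw [h3]
  linarith
end

section
/- Let V be an n-dimensional real inner product space (n ≥ 2), W a real inner product space, ζ : V × V → W a symmetric bilinear map, and T the tensor defined by the algebraic Gauss equation. Let r > 0 with r ≠ n(n−1) and a(r) = (n−1)(n+r)(n²−n−r)/(nr). Fix an orthonormal basis (e_1,…,e_n) of V with ζ_{ij} = ζ(e_i,e_j), and let Π_{n−1} be the hyperplane spanned by e_1,…,e_{n−1}. Then equality 2τ_T = r·C^{T,ζ} + a(r)·C^{T,ζ}(Π_{n−1}) holds if and only if ζ_{ij} = 0 for all i ≠ j, i,j ∈ {1,…,n}, and ζ_{11} = ζ_{22} = ⋯ = ζ_{n−1,n−1}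 = (r/(n(n−1))) ζ_{nn}. -/
open RealInnerProductSpace

lemma cas_two_tau {n : ℕ} (f : Fin n → Fin n → ℝ) (hs : ∀ i j, f i j = f j i)
    (h0 : ∀ i, f i i = 0) :
    2 * (∑ i : Fin n, ∑ j : Fin n, if i < j then f i j else 0) = ∑ i, ∑ j, f i j := by
  have h1 : (∑ i : Fin n, ∑ j : Fin n, if i < j then f i j else 0)
      = ∑ i : Fin n, ∑ j : Fin n, if j < i then f i j else 0 := by
    rw [Finset.sum_comm]
    refine Finset.sum_congr rfl fun i _ => Finset.sum_congr rfl fun j _ => ?_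
    rw [hs j i]
  rw [two_mul]
  nth_rewrite 2 [h1]
  rw [← Finset.sum_add_distrib]
  refine Finset.sum_congr rfl fun i _ => ?_
  rw [← Finset.sum_add_distrib]
  refine Finset.sum_congr rfl fun j _ => ?_
  rcases lt_trichotomy i j with h | h | h
  · simp [h, not_lt.mpr h.le]
  · subst h; simp [h0]
  · simp [h, not_lt.mpr h.le]

lemma cas_sq_sum {W : Type*} [NormedAddCommGroup W] [InnerProductSpace ℝ W] {m : ℕ}
    (d : Fin m → W) : ‖∑ i, d i‖ ^ 2 ≤ m * ∑ i, ‖d i‖ ^ 2 := by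
  calc ‖∑ i, d i‖ ^ 2 ≤ (∑ i, ‖d i‖) ^ 2 := by gcongr; exact norm_sum_le _ _
    _ ≤ _ := by simpa using sq_sum_le_card_mul_sum_sq (s := Finset.univ) (f := fun i => ‖d i‖)

/-- The completed square for the diagonal part. -/
lemma cas_diag {W : Type*} [NormedAddCommGroup W] [InnerProductSpace ℝ W] {m : ℕ}
    (hm : 0 < (m : ℝ)) (r : ℝ) (hr : 0 < r) (x : Fin m → W) (y : W) :
    ((m + 1 + r) * m / r) * ∑ i, ‖x i‖ ^ 2 + ((m + 1 + r) / (m + 1)) * ‖y‖ ^ 2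
      - ‖∑ i, x i + y‖ ^ 2
    = ((m + 1 + r) * m / r) * ∑ i, ‖x i - (r / ((m + 1) * m)) • y‖ ^ 2
      - ‖∑ i, (x i - (r / ((m + 1) * m)) • y)‖ ^ 2 := by
  have h1 : ∀ i, ‖x i - (r / ((m + 1) * m : ℝ)) • y‖ ^ 2 = ‖x i‖ ^ 2
      - 2 * (r / ((m + 1) * m)) * ⟪x i, y⟫ + (r / ((m + 1) * m)) ^ 2 * ‖y‖ ^ 2 := by
    intro i
    rw [norm_sub_sq_real, inner_smul_right, norm_smul, mul_pow, Real.norm_eq_abs, sq_abs]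
    ring
  have h2 : ∑ i, (x i - (r / ((m + 1) * m : ℝ)) • y) = ∑ i, x i - (r / (m + 1 : ℝ)) • y := by
    rw [Finset.sum_sub_distrib, Finset.sum_const, Finset.card_univ, Fintype.card_fin,
      ← Nat.cast_smul_eq_nsmul ℝ, smul_smul]
    congr 2
    field_simp
  rw [h2, norm_sub_sq_real, norm_add_sq_real, inner_smul_right, norm_smul, mul_pow,
    Real.norm_eq_abs, sq_abs]
  simp_rw [h1]
  rw [Finset.sum_add_distrib, Finset.sum_sub_distrib, ← Finset.mul_sum, ← sum_inner,
    Finset.sum_const, Finset.card_univ, Fintype.card_fin, nsmul_eq_mul]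
  field_simp
  ring

/-- For `r > 0`, `r ≠ n(n−1)`, the equality
`2τ_T = r·C^{T,ζ} + a(r)·C^{T,ζ}(P_{n−1})` holds iff `ζ_{ij} = 0` for `i ≠ j` and
`ζ_{11} = ⋯ = ζ_{n−1,n−1} = (r/(n(n−1))) ζ_{nn}`. -/
theorem algebraic_casorati_equality_iff
    {V W : Type*} [NormedAddCommGroup V] [InnerProductSpace ℝ V]
    [FiniteDimensional ℝ V] [NormedAddCommGroup W] [InnerProductSpace ℝ W]
    (n : ℕ) (hn : 2 ≤ n) (e : OrthonormalBasis (Fin n) ℝ V)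
    (ζ : V →ₗ[ℝ] V →ₗ[ℝ] W) (hζ : ∀ X Y : V, ζ X Y = ζ Y X)
    (T : V → V → V → V → ℝ)
    (hT : ∀ X Y Z W' : V, T X Y Z W' = ⟪ζ X W', ζ Y Z⟫ - ⟪ζ X Z, ζ Y W'⟫)
    (r : ℝ) (hr0 : 0 < r) (hr1 : r ≠ (n : ℝ) * ((n : ℝ) - 1))
    (τ C CP : ℝ)
    (hτ : τ = ∑ i : Fin n, ∑ j : Fin n,
        if i < j then T (e i) (e j) (e j) (e i) else 0)
    (hC : C = (1 / (n : ℝ)) * ∑ i : Fin n, ∑ j : Fin n, ‖ζ (e i) (e j)‖ ^ 2)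
    (hCP : CP = (1 / ((n : ℝ) - 1)) *
        ∑ i ∈ Finset.univ.filter (fun i : Fin n => (i : ℕ) < n - 1),
          ∑ j ∈ Finset.univ.filter (fun j : Fin n => (j : ℕ) < n - 1),
            ‖ζ (e i) (e j)‖ ^ 2) :
    (2 * τ = r * C +
        (((n : ℝ) - 1) * ((n : ℝ) + r) * ((n : ℝ) ^ 2 - (n : ℝ) - r) / ((n : ℝ) * r))
          * CP) ↔
    ((∀ i j : Fin n, i ≠ j → ζ (e i) (e j) = 0) ∧
      (∀ i : Fin n, (i : ℕ) < n - 1 →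
        ζ (e i) (e i) = (r / ((n : ℝ) * ((n : ℝ) - 1))) •
          ζ (e ⟨n - 1, by omega⟩) (e ⟨n - 1, by omega⟩))) := by
  obtain ⟨m, rfl⟩ : ∃ m, n = m + 1 := ⟨n - 1, by omega⟩
  have hm : 0 < (m : ℝ) := by exact_mod_cast (by omega : 0 < m)
  have hlast : (⟨m + 1 - 1, by omega⟩ : Fin (m + 1)) = Fin.last m := rfl
  rw [hlast]
  generalize hz : (fun i j => ζ (e i) (e j)) = z
  have hz' : ∀ i j, ζ (e i) (e j) = z i j := fun i j => by rw [← hz]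
  have zs : ∀ i j, z i j = z j i := fun i j => by rw [← hz', ← hz', hζ]
  simp only [hz', hT] at *
  set x : Fin m → W := fun i => z i.castSucc i.castSucc with hx
  set y : W := z (Fin.last m) (Fin.last m) with hy
  set Q : ℝ := ∑ i : Fin m, ‖z i.castSucc (Fin.last m)‖ ^ 2 with hQ
  set O : ℝ := ∑ i : Fin m, ∑ j : Fin m,
    if i = j then 0 else ‖z i.castSucc j.castSucc‖ ^ 2 with hO
  have hP : ∑ i : Fin m, ∑ j : Fin m, ‖z i.castSucc j.castSucc‖ ^ 2
      = ∑ i, ‖x i‖ ^ 2 + O := by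
    rw [hO, ← Finset.sum_add_distrib]
    refine Finset.sum_congr rfl fun i _ => ?_
    have : ‖x i‖ ^ 2 = ∑ j : Fin m, if i = j then ‖z i.castSucc j.castSucc‖ ^ 2 else 0 := by
      simp [hx]
    rw [this, ← Finset.sum_add_distrib]
    refine Finset.sum_congr rfl fun j _ => ?_
    split_ifs <;> simp
  have hAll : ∑ i, ∑ j, ‖z i j‖ ^ 2 = ∑ i, ‖x i‖ ^ 2 + O + 2 * Q + ‖y‖ ^ 2 := by
    simp only [Fin.sum_univ_castSucc, Finset.sum_add_distrib, zs (Fin.last m) (Fin.castSucc _)]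
    rw [hP, ← hQ, ← hy]
    ring
  have h2τ : 2 * τ = ‖∑ i, x i + y‖ ^ 2 - (∑ i, ‖x i‖ ^ 2 + O + 2 * Q + ‖y‖ ^ 2) := by
    rw [hτ, cas_two_tau (fun i j => ⟪z i i, z j j⟫ - ⟪z i j, z j i⟫)]
    · rw [← hAll]
      have : ∑ i, x i + y = ∑ i, z i i := by rw [Fin.sum_univ_castSucc]
      rw [this, ← real_inner_self_eq_norm_sq, sum_inner]
      simp only [Finset.sum_sub_distrib, inner_sum]
      congr 1
      refine Finset.sum_congr rfl fun i _ => Finset.sum_congr rfl fun j _ => ?_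
      rw [zs j i, real_inner_self_eq_norm_sq]
    · intro i j
      rw [real_inner_comm (z i i), real_inner_comm (z i j)]
    · intro i; simp
  have hCP' : CP = (1 / (m : ℝ)) * (∑ i, ‖x i‖ ^ 2 + O) := by
    rw [hCP, ← hP]
    simp [Finset.sum_filter, Fin.sum_univ_castSucc]
  have hD : r * C + ((((m + 1 : ℕ) : ℝ) - 1) * (((m + 1 : ℕ) : ℝ) + r) *
      (((m + 1 : ℕ) : ℝ) ^ 2 - ((m + 1 : ℕ) : ℝ) - r) / (((m + 1 : ℕ) : ℝ) * r)) * CP - 2 * τ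
      = ((m + 1 + r) * m / r) * O + 2 * ((m + 1 + r) / (m + 1)) * Q
        + (((m + 1 + r) * m / r) * ∑ i, ‖x i - (r / ((m + 1) * m)) • y‖ ^ 2
      - ‖∑ i, (x i - (r / ((m + 1) * m)) • y)‖ ^ 2) := by
    rw [← cas_diag hm r hr0, h2τ, hCP', hC, hAll]
    push_cast
    field_simp
    ring
  have hcc : r / (((m + 1 : ℕ) : ℝ) * (((m + 1 : ℕ) : ℝ) - 1)) = r / ((m + 1) * m) := by
    push_cast; simp
  rw [hcc, eq_comm, ← sub_eq_zero, hD]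
  have hO0 : 0 ≤ O := Finset.sum_nonneg fun i _ => Finset.sum_nonneg fun j _ => by
    split_ifs <;> positivity
  have hQ0 : 0 ≤ Q := Finset.sum_nonneg fun i _ => by positivity
  constructor
  · intro h
    have hcs := cas_sq_sum (fun i => x i - (r / ((m + 1) * m : ℝ)) • y)
    have hE0 : 0 ≤ ∑ i, ‖x i - (r / ((m + 1) * m : ℝ)) • y‖ ^ 2 :=
      Finset.sum_nonneg fun i _ => by positivity
    set E := ∑ i, ‖x i - (r / ((m + 1) * m : ℝ)) • y‖ ^ 2 with hE
    have hA : ((m + 1 + r) * m / r : ℝ) = (m + 1) * m / r + m := by field_simp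
    have hle : ((m + 1 + r) * m / r) * O + 2 * ((m + 1 + r) / (m + 1)) * Q
        + ((m + 1) * m / r) * E ≤ 0 := by
      have : ((m + 1 + r) * m / r : ℝ) * E = ((m + 1) * m / r) * E + m * E := by
        rw [hA]; ring
      linarith
    have p1 : 0 < ((m + 1 + r) * m / r : ℝ) := by positivity
    have p2 : 0 < 2 * ((m + 1 + r) / (m + 1) : ℝ) := by positivity
    have p3 : 0 < ((m + 1) * m / r : ℝ) := by positivity
    have q1 := mul_nonneg p1.le hO0
    have q2 := mul_nonneg p2.le hQ0
    have q3 := mul_nonneg p3.le hE0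
    have O0 : O = 0 := (mul_eq_zero.mp (by linarith :
      ((m + 1 + r) * m / r : ℝ) * O = 0)).resolve_left p1.ne'
    have Q0 : Q = 0 := (mul_eq_zero.mp (by linarith :
      2 * ((m + 1 + r) / (m + 1) : ℝ) * Q = 0)).resolve_left p2.ne'
    have E0 : E = 0 := (mul_eq_zero.mp (by linarith :
      ((m + 1) * m / r : ℝ) * E = 0)).resolve_left p3.ne'
    have zl : ∀ i : Fin m, z i.castSucc (Fin.last m) = 0 := by
      intro i
      have := (Finset.sum_eq_zero_iff_of_nonneg (fun i _ => by positivity)).mp Q0 i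
        (Finset.mem_univ _)
      simpa using this
    have zo : ∀ i j : Fin m, i ≠ j → z i.castSucc j.castSucc = 0 := by
      intro i j hij
      have h1 := (Finset.sum_eq_zero_iff_of_nonneg (fun i _ => Finset.sum_nonneg fun j _ => by
        split_ifs <;> positivity)).mp O0 i (Finset.mem_univ _)
      have h2 := (Finset.sum_eq_zero_iff_of_nonneg (fun j _ => by
        split_ifs <;> positivity)).mp h1 j (Finset.mem_univ _)
      simpa [hij] using h2
    have zd : ∀ i : Fin m, x i = (r / ((m + 1) * m : ℝ)) • y := by
      intro i
      have := (Finset.sum_eq_zero_iff_of_nonneg (fun i _ => by positivity)).mp E0 i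
        (Finset.mem_univ _)
      exact sub_eq_zero.mp (by simpa using this)
    refine ⟨fun i j => ?_, fun i => ?_⟩
    · refine Fin.lastCases ?_ (fun i => ?_) i <;> refine Fin.lastCases ?_ (fun j => ?_) j
      · intro h; exact absurd rfl h
      · intro _; rw [zs]; exact zl j
      · intro _; exact zl i
      · intro h; exact zo i j fun h' => h (by rw [h'])
    · refine Fin.lastCases ?_ (fun i => ?_) i
      · intro h; simp at h
      · intro _; exact zd i
  · rintro ⟨h1, h2⟩
    have O0 : O = 0 := Finset.sum_eq_zero fun i _ => Finset.sum_eq_zero fun j _ => by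
      split_ifs with h
      · rfl
      · rw [h1 _ _ fun h' => h (Fin.castSucc_injective _ h')]; simp
    have Q0 : Q = 0 := Finset.sum_eq_zero fun i _ => by
      rw [h1 _ _ (Fin.castSucc_lt_last i).ne]; simp
    have zd : ∀ i : Fin m, x i - (r / ((m + 1) * m : ℝ)) • y = 0 := fun i =>
      sub_eq_zero.mpr (h2 i.castSucc (by simp))
    simp [O0, Q0, zd]
end

section
/- Let V be an n-dimensional real inner product space (n ≥ 2), W a real inner product space, ζ : V × V → W a symmetric bilinear map, and T the tensor defined by the algebraic Gauss equation. Then for every orthonormal basis (e_1,…,e_n) of V, writing ζ_{ij} = ζ(e_i,e_j), τ_T = Σ_{1≤i<j≤n} T(e_i,e_j,e_j,e_i), C^{T,ζ} = (1/n) Σ_{i,j=1}^n ‖ζ_{ij}‖², and C^{T,ζ}(Π_{n−1}) = (1/(n−1)) Σ_{i,j=1}^{n−1} ‖ζ_{ij}‖² for the hyperplane Π_{n−1} spanned by e_1,…,e_{n−1}, one has 2τ_T/(n(n−1)) ≤ (1/2) C^{T,ζ} + ((n+1)/(2n)) C^{T,ζ}(Π_{n−1}). In particular, the T-normalized scalar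 curvature (τ_T)_{Nor} = 2τ_T/(n(n−1)) is bounded above by the algebraic Casorati curvature δ_{C^{T,ζ}}(n−1) = (1/2)C^{T,ζ} + ((n+1)/(2n)) inf over hyperplanes of C^{T,ζ}(Π_{n−1}). -/
open RealInnerProductSpace

theorem aux_norm_sum {W : Type*} [NormedAddCommGroup W] (m : ℕ) (x : Fin m → W) :
    ‖∑ i, x i‖ ^ 2 ≤ m * ∑ i, ‖x i‖ ^ 2 := by
  have h1 : ‖∑ i, x i‖ ≤ ∑ i, ‖x i‖ := norm_sum_le _ _
  have h2 := sq_sum_le_card_mul_sum_sq (s := Finset.univ) (f := fun i : Fin m => ‖x i‖)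
  simp only [Finset.card_univ, Fintype.card_fin] at h2
  have h3 := norm_nonneg (∑ i, x i)
  nlinarith

theorem aux_double {n : ℕ} (F : Fin n → Fin n → ℝ) (hs : ∀ i j, F i j = F j i)
    (h0 : ∀ i, F i i = 0) :
    2 * (∑ i, ∑ j, if i < j then F i j else 0) = ∑ i, ∑ j, F i j := by
  have h : ∀ i j, F i j = (if i < j then F i j else 0) + (if j < i then F j i else 0) := by
    intro i j
    rcases lt_trichotomy i j with h | h | h
    · simp [h, h.not_gt]
    · subst h; simp [h0]
    · simp [h, h.not_gt, hs i j]
  have h2 : ∑ i, ∑ j, F i j = (∑ i, ∑ j, if i < j then F i j else 0)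
      + ∑ i, ∑ j, if j < i then F j i else 0 := by
    simp only [← Finset.sum_add_distrib]
    exact Finset.sum_congr rfl fun i _ => Finset.sum_congr rfl fun j _ => h i j
  rw [h2, two_mul]
  congr 1
  exact Finset.sum_comm

theorem aux_key {W : Type*} [NormedAddCommGroup W] (m : ℕ) (hm : 1 ≤ m)
    (z : Fin (m + 1) → Fin (m + 1) → W) :
    ‖∑ i, z i i‖ ^ 2 ≤ ((m : ℝ) + 2) / 2 * (∑ i, ∑ j, ‖z i j‖ ^ 2
      + ∑ i : Fin m, ∑ j : Fin m, ‖z i.castSucc j.castSucc‖ ^ 2) := by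
  have hm' : (1 : ℝ) ≤ m := by exact_mod_cast hm
  have hA := aux_norm_sum m (fun i => z i.castSucc i.castSucc)
  have hD : ∑ i : Fin m, ‖z i.castSucc i.castSucc‖ ^ 2
      ≤ ∑ i : Fin m, ∑ j : Fin m, ‖z i.castSucc j.castSucc‖ ^ 2 :=
    Finset.sum_le_sum fun i _ => Finset.single_le_sum
      (f := fun j : Fin m => ‖z i.castSucc j.castSucc‖ ^ 2)
      (fun j _ => by positivity) (Finset.mem_univ i)
  have hS : ∑ i : Fin m, ∑ j : Fin m, ‖z i.castSucc j.castSucc‖ ^ 2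
      + ‖z (Fin.last m) (Fin.last m)‖ ^ 2 ≤ ∑ i, ∑ j, ‖z i j‖ ^ 2 := by
    simp only [Fin.sum_univ_castSucc, Finset.sum_add_distrib]
    have h1 : 0 ≤ ∑ i : Fin m, ‖z i.castSucc (Fin.last m)‖ ^ 2 := by positivity
    have h2 : 0 ≤ ∑ i : Fin m, ‖z (Fin.last m) i.castSucc‖ ^ 2 := by positivity
    linarith
  have hH : ‖∑ i, z i i‖ ≤ ‖∑ i : Fin m, z i.castSucc i.castSucc‖
      + ‖z (Fin.last m) (Fin.last m)‖ := by
    rw [Fin.sum_univ_castSucc]; exact norm_add_le _ _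
  have hH2 := pow_le_pow_left₀ (norm_nonneg _) hH 2
  set a := ‖∑ i : Fin m, z i.castSucc i.castSucc‖
  set b := ‖z (Fin.last m) (Fin.last m)‖
  set D := ∑ i : Fin m, ‖z i.castSucc i.castSucc‖ ^ 2
  set S' := ∑ i : Fin m, ∑ j : Fin m, ‖z i.castSucc j.castSucc‖ ^ 2
  set S := ∑ i, ∑ j, ‖z i j‖ ^ 2
  have h1 : (a + b) ^ 2 ≤ ((m : ℝ) + 2) / 2 * (2 * D + b ^ 2) := by
    have : (m : ℝ) * (a + b) ^ 2 ≤ m * (((m : ℝ) + 2) / 2 * (2 * D + b ^ 2)) := by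
      nlinarith [sq_nonneg (2 * a - m * b)]
    exact le_of_mul_le_mul_left this (by linarith)
  have h2 : ((m : ℝ) + 2) / 2 * (2 * D + b ^ 2) ≤ ((m : ℝ) + 2) / 2 * (S + S') :=
    mul_le_mul_of_nonneg_left (by linarith) (by linarith)
  linarith

/-- The normalized `T`-scalar curvature satisfies
`2τ_T/(n(n−1)) ≤ (1/2) C^{T,ζ} + ((n+1)/(2n)) C^{T,ζ}(P_{n−1})` for every
orthonormal basis, where `P_{n−1}` is the hyperplane spanned by `e_1,…,e_{n−1}`. -/
theorem algebraic_casorati_inequality_delta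
    {V W : Type*} [NormedAddCommGroup V] [InnerProductSpace ℝ V]
    [FiniteDimensional ℝ V] [NormedAddCommGroup W] [InnerProductSpace ℝ W]
    (n : ℕ) (hn : 2 ≤ n) (e : OrthonormalBasis (Fin n) ℝ V)
    (ζ : V →ₗ[ℝ] V →ₗ[ℝ] W) (hζ : ∀ X Y : V, ζ X Y = ζ Y X)
    (T : V → V → V → V → ℝ)
    (hT : ∀ X Y Z W' : V, T X Y Z W' = ⟪ζ X W', ζ Y Z⟫ - ⟪ζ X Z, ζ Y W'⟫)
    (τ C CP : ℝ)
    (hτ : τ = ∑ i : Fin n, ∑ j : Fin n,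
        if i < j then T (e i) (e j) (e j) (e i) else 0)
    (hC : C = (1 / (n : ℝ)) * ∑ i : Fin n, ∑ j : Fin n, ‖ζ (e i) (e j)‖ ^ 2)
    (hCP : CP = (1 / ((n : ℝ) - 1)) *
        ∑ i ∈ Finset.univ.filter (fun i : Fin n => (i : ℕ) < n - 1),
          ∑ j ∈ Finset.univ.filter (fun j : Fin n => (j : ℕ) < n - 1),
            ‖ζ (e i) (e j)‖ ^ 2) :
    2 * τ / ((n : ℝ) * ((n : ℝ) - 1)) ≤
      (1 / 2) * C + (((n : ℝ) + 1) / (2 * (n : ℝ))) * CP := by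
  obtain ⟨m, rfl⟩ : ∃ m, n = m + 1 := ⟨n - 1, by omega⟩
  have hm : 1 ≤ m := by omega
  have hm' : (1 : ℝ) ≤ m := by exact_mod_cast hm
  have hk := aux_key m hm (fun i j => ζ (e i) (e j))
  have hd := aux_double (fun i j => T (e i) (e j) (e j) (e i))
    (fun i j => by
      simp only [hT]; rw [real_inner_comm, real_inner_comm (ζ (e i) (e j))])
    (fun i => by simp only [hT]; ring)
  rw [← hτ] at hd
  have he : ∑ i, ∑ j, T (e i) (e j) (e j) (e i)
      = ‖∑ i, ζ (e i) (e i)‖ ^ 2 - ∑ i, ∑ j, ‖ζ (e i) (e j)‖ ^ 2 := by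
    rw [← real_inner_self_eq_norm_sq, sum_inner]
    simp only [inner_sum, ← Finset.sum_sub_distrib]
    refine Finset.sum_congr rfl fun i _ => Finset.sum_congr rfl fun j _ => ?_
    rw [hT, hζ (e j) (e i), real_inner_self_eq_norm_sq]
  have hf : ∑ i ∈ Finset.univ.filter (fun i : Fin (m + 1) => (i : ℕ) < m + 1 - 1),
          ∑ j ∈ Finset.univ.filter (fun j : Fin (m + 1) => (j : ℕ) < m + 1 - 1),
            ‖ζ (e i) (e j)‖ ^ 2
      = ∑ i : Fin m, ∑ j : Fin m, ‖ζ (e i.castSucc) (e j.castSucc)‖ ^ 2 := by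
    simp [Finset.sum_filter, Fin.sum_univ_castSucc]
  rw [hf] at hCP
  rw [hd, he, hC, hCP]
  push_cast
  simp only [add_sub_cancel_right]
  set S' := ∑ i : Fin m, ∑ j : Fin m, ‖ζ (e i.castSucc) (e j.castSucc)‖ ^ 2
  set S := ∑ i, ∑ j, ‖ζ (e i) (e j)‖ ^ 2
  have hmp : (0 : ℝ) < m := by linarith
  rw [div_le_iff₀ (by positivity)]
  have : (1 / 2 * (1 / ((m : ℝ) + 1) * S) + ((m : ℝ) + 1 + 1) / (2 * ((m : ℝ) + 1)) * (1 / (m : ℝ) * S'))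
      * (((m : ℝ) + 1) * m) = m / 2 * S + (m + 2) / 2 * S' := by
    field_simp
    ring
  rw [this]
  linarith
end

section
/- Let V be an n-dimensional real inner product space (n ≥ 2), W a real inner product space, ζ : V × V → W a symmetric bilinear map, and T the tensor defined by the algebraic Gauss equation. Fix an orthonormal basis (e_1,…,e_n) of V with ζ_{ij} = ζ(e_i,e_j), and let Π_{n−1} be the hyperplane spanned by e_1,…,e_{n−1}. Then equality 2τ_T/(n(n−1)) = (1/2) C^{T,ζ} + ((n+1)/(2n)) C^{T,ζ}(Π_{n−1}) holds if and only if ζ_{ij} = 0 for all i ≠ j, i,j ∈ {1,…,n}, and ζ_{11} = ζ_{22} = ⋯ = ζ_{n−1,n−1} = (1/2) ζ_{nn}. -/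
open RealInnerProductSpace


theorem casorati_two_tau {n : ℕ} (g : Fin n → Fin n → ℝ) (hs : ∀ i j, g i j = g j i)
    (h0 : ∀ i, g i i = 0) :
    2 * (∑ i : Fin n, ∑ j : Fin n, if i < j then g i j else 0) = ∑ i, ∑ j, g i j := by
  have h1 : (∑ i : Fin n, ∑ j : Fin n, if i < j then g i j else 0)
      = ∑ i : Fin n, ∑ j : Fin n, if j < i then g i j else 0 := by
    rw [Finset.sum_comm]
    refine Finset.sum_congr rfl fun i _ => Finset.sum_congr rfl fun j _ => ?_
    rw [hs]
  rw [two_mul]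
  nth_rewrite 2 [h1]
  rw [← Finset.sum_add_distrib]
  refine Finset.sum_congr rfl fun i _ => ?_
  rw [← Finset.sum_add_distrib]
  refine Finset.sum_congr rfl fun j _ => ?_
  rcases lt_trichotomy i j with h | h | h
  · simp [h, h.not_gt]
  · subst h; simp [h0]
  · simp [h, h.not_gt]

theorem casorati_filter {m : ℕ} (f : Fin (m + 1) → ℝ) :
    ∑ i ∈ Finset.univ.filter (fun i : Fin (m + 1) => (i : ℕ) < m + 1 - 1), f i
      = ∑ i : Fin m, f i.castSucc := by
  rw [Finset.sum_filter, Fin.sum_univ_castSucc]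
  simp

theorem casorati_square {W : Type*} [NormedAddCommGroup W] [InnerProductSpace ℝ W]
    {m : ℕ} (a : Fin m → W) (b c : W) (hc : ((m : ℝ) + 2) • c = (2 : ℝ) • (∑ i, a i + b)) :
    ((m : ℝ) + 2) * (2 * ∑ i, ‖a i‖ ^ 2 + ‖b‖ ^ 2) - 2 * ‖∑ i, a i + b‖ ^ 2
      = ((m : ℝ) + 2) * (2 * ∑ i, ‖a i - (1 / 2 : ℝ) • c‖ ^ 2 + ‖b - c‖ ^ 2) := by
  have hm : (0 : ℝ) < (m : ℝ) + 2 := by positivity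
  have e1 : ∑ i, ‖a i - (1 / 2 : ℝ) • c‖ ^ 2
      = ∑ i, ‖a i‖ ^ 2 - ⟪∑ i, a i, c⟫ + m * (1 / 4) * ‖c‖ ^ 2 := by
    have : ∀ i, ‖a i - (1 / 2 : ℝ) • c‖ ^ 2 = ‖a i‖ ^ 2 - ⟪a i, c⟫ + 1 / 4 * ‖c‖ ^ 2 := by
      intro i
      rw [norm_sub_sq_real, norm_smul, real_inner_smul_right, mul_pow]
      norm_num
      ring
    simp only [this]
    rw [Finset.sum_add_distrib, Finset.sum_sub_distrib, sum_inner]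
    simp
    ring
  have e2 := norm_sub_sq_real b c
  have e3 : ((m : ℝ) + 2) * ‖c‖ ^ 2 = 2 * (⟪∑ i, a i, c⟫ + ⟪b, c⟫) := by
    have := congrArg (fun x => ⟪x, c⟫) hc
    simp only [real_inner_smul_left, inner_add_left, real_inner_self_eq_norm_sq] at this
    exact this
  have e4 : ((m : ℝ) + 2) * (⟪∑ i, a i, c⟫ + ⟪b, c⟫) = 2 * ‖∑ i, a i + b‖ ^ 2 := by
    have := congrArg (fun x => ⟪∑ i, a i + b, x⟫) hc
    simp only [real_inner_smul_right, real_inner_self_eq_norm_sq] at this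
    rwa [inner_add_left] at this
  rw [e1, e2]
  linear_combination e4 - ((m : ℝ) + 2) / 2 * e3

theorem casorati_core {W : Type*} [NormedAddCommGroup W] [InnerProductSpace ℝ W]
    {m : ℕ} (z : Fin (m + 1) → Fin (m + 1) → W) (hz : ∀ i j, z i j = z j i) :
    2 * ‖∑ i, z i i‖ ^ 2 = ((m : ℝ) + 2) * (∑ i, ∑ j, ‖z i j‖ ^ 2
        + ∑ i : Fin m, ∑ j : Fin m, ‖z i.castSucc j.castSucc‖ ^ 2) ↔
    (∀ i j, i ≠ j → z i j = 0) ∧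
      ∀ i : Fin m, z i.castSucc i.castSucc = (1 / 2 : ℝ) • z (Fin.last m) (Fin.last m) := by
  have hm : (0 : ℝ) < (m : ℝ) + 2 := by positivity
  set a : Fin m → W := fun i => z i.castSucc i.castSucc with ha
  set b := z (Fin.last m) (Fin.last m) with hb
  set c : W := ((m : ℝ) + 2)⁻¹ • (2 : ℝ) • (∑ i, a i + b) with hcd
  have hc : ((m : ℝ) + 2) • c = (2 : ℝ) • (∑ i, a i + b) := by
    rw [hcd, smul_inv_smul₀ hm.ne']
  have hH : ∑ i, z i i = ∑ i, a i + b := by rw [Fin.sum_univ_castSucc]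
  set O := ∑ i : Fin m, ∑ j : Fin m, (if i = j then 0 else ‖z i.castSucc j.castSucc‖ ^ 2) with hO
  set N := ∑ i : Fin m, ‖z i.castSucc (Fin.last m)‖ ^ 2 with hN
  have hSP : ∑ i : Fin m, ∑ j : Fin m, ‖z i.castSucc j.castSucc‖ ^ 2
      = ∑ i, ‖a i‖ ^ 2 + O := by
    rw [hO, ← Finset.sum_add_distrib]
    refine Finset.sum_congr rfl fun i _ => ?_
    rw [← Finset.add_sum_erase _ _ (Finset.mem_univ i),
      ← Finset.add_sum_erase (a := i) _ (fun j => if i = j then 0 else _) (Finset.mem_univ i)]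
    simp only [if_true, zero_add]
    congr 1
    refine Finset.sum_congr rfl fun j hj => ?_
    rw [if_neg (Finset.ne_of_mem_erase hj).symm]
  have hS : ∑ i, ∑ j, ‖z i j‖ ^ 2
      = ∑ i : Fin m, ∑ j : Fin m, ‖z i.castSucc j.castSucc‖ ^ 2 + 2 * N + ‖b‖ ^ 2 := by
    rw [Fin.sum_univ_castSucc]
    simp only [Fin.sum_univ_castSucc (n := m), Finset.sum_add_distrib, hz (Fin.last m) _]
    rw [← hN, ← hb]
    ring
  have key := casorati_square a b c hc
  have hO0 : ∀ i ∈ Finset.univ, 0 ≤ ∑ j : Fin m,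
      (if i = j then 0 else ‖z i.castSucc j.castSucc‖ ^ 2) := fun i _ =>
    Finset.sum_nonneg fun j _ => by split_ifs <;> positivity
  have hOn : 0 ≤ O := Finset.sum_nonneg hO0
  have hNn : 0 ≤ N := by positivity
  set A := ∑ i, ‖a i - (1 / 2 : ℝ) • c‖ ^ 2 with hA
  have hAn : 0 ≤ A := by positivity
  have hBn : 0 ≤ ‖b - c‖ ^ 2 := by positivity
  rw [hH, hS, hSP]
  constructor
  · intro h
    have h1 : ((m : ℝ) + 2) * (2 * O + 2 * N + 2 * A + ‖b - c‖ ^ 2) = 0 := by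
      linear_combination -key - h
    have h2 := (mul_eq_zero.1 h1).resolve_left hm.ne'
    have hOz : O = 0 := by linarith
    have hNz : N = 0 := by linarith
    have hAz : A = 0 := by linarith
    have hBz : ‖b - c‖ ^ 2 = 0 := by linarith
    have hbc : b = c := by
      rw [← sub_eq_zero]; simpa using hBz
    have hNz' : ∀ i : Fin m, z i.castSucc (Fin.last m) = 0 := fun i => by
      have := (Finset.sum_eq_zero_iff_of_nonneg (fun i _ => by positivity)).1 hNz i
        (Finset.mem_univ _)
      simpa using this
    constructor
    · intro i j hij
      induction i using Fin.lastCases with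
      | last =>
        induction j using Fin.lastCases with
        | last => exact absurd rfl hij
        | cast j => rw [hz]; exact hNz' j
      | cast i =>
        induction j using Fin.lastCases with
        | last => exact hNz' i
        | cast j =>
          have h3 := (Finset.sum_eq_zero_iff_of_nonneg hO0).1 hOz i (Finset.mem_univ _)
          have h4 := (Finset.sum_eq_zero_iff_of_nonneg
            (fun j _ => by split_ifs <;> positivity)).1 h3 j (Finset.mem_univ _)
          rw [if_neg (fun h => hij (by rw [h]))] at h4
          simpa using h4
    · intro i
      have := (Finset.sum_eq_zero_iff_of_nonneg (fun i _ => by positivity)).1 hAz i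
        (Finset.mem_univ _)
      rw [hbc, ← sub_eq_zero]
      simpa using this
  · rintro ⟨h1, h2⟩
    have hOz : O = 0 := Finset.sum_eq_zero fun i _ => Finset.sum_eq_zero fun j _ => by
      split_ifs with h
      · rfl
      · rw [h1 _ _ (fun h' => h (Fin.castSucc_injective _ h'))]; simp
    have hNz : N = 0 := Finset.sum_eq_zero fun i _ => by
      rw [h1 _ _ (Fin.castSucc_lt_last i).ne]; simp
    have h2' : ∀ i, a i = (1 / 2 : ℝ) • b := h2
    have hbc : b = c := by
      have : ((m : ℝ) + 2) • c = ((m : ℝ) + 2) • b := by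
        rw [hc]
        simp only [h2', Finset.sum_const, Finset.card_univ, Fintype.card_fin]
        rw [← Nat.cast_smul_eq_nsmul ℝ]
        module
      exact (smul_right_injective W hm.ne' this).symm
    have hAz : A = 0 := Finset.sum_eq_zero fun i _ => by
      rw [h2', hbc]; simp
    have hBz : ‖b - c‖ ^ 2 = 0 := by rw [hbc]; simp
    rw [hAz, hBz] at key
    rw [hOz, hNz]
    linear_combination -key

/-- Equality
`2τ_T/(n(n−1)) = (1/2) C^{T,ζ} + ((n+1)/(2n)) C^{T,ζ}(P_{n−1})` holds iff
`ζ_{ij} = 0` for `i ≠ j` and `ζ_{11} = ⋯ = ζ_{n−1,n−1} = (1/2) ζ_{nn}`. -/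
theorem algebraic_casorati_equality_delta_iff
    {V W : Type*} [NormedAddCommGroup V] [InnerProductSpace ℝ V]
    [FiniteDimensional ℝ V] [NormedAddCommGroup W] [InnerProductSpace ℝ W]
    (n : ℕ) (hn : 2 ≤ n) (e : OrthonormalBasis (Fin n) ℝ V)
    (ζ : V →ₗ[ℝ] V →ₗ[ℝ] W) (hζ : ∀ X Y : V, ζ X Y = ζ Y X)
    (T : V → V → V → V → ℝ)
    (hT : ∀ X Y Z W' : V, T X Y Z W' = ⟪ζ X W', ζ Y Z⟫ - ⟪ζ X Z, ζ Y W'⟫)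
    (τ C CP : ℝ)
    (hτ : τ = ∑ i : Fin n, ∑ j : Fin n,
        if i < j then T (e i) (e j) (e j) (e i) else 0)
    (hC : C = (1 / (n : ℝ)) * ∑ i : Fin n, ∑ j : Fin n, ‖ζ (e i) (e j)‖ ^ 2)
    (hCP : CP = (1 / ((n : ℝ) - 1)) *
        ∑ i ∈ Finset.univ.filter (fun i : Fin n => (i : ℕ) < n - 1),
          ∑ j ∈ Finset.univ.filter (fun j : Fin n => (j : ℕ) < n - 1),
            ‖ζ (e i) (e j)‖ ^ 2) :
    (2 * τ / ((n : ℝ) * ((n : ℝ) - 1)) =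
        (1 / 2) * C + (((n : ℝ) + 1) / (2 * (n : ℝ))) * CP) ↔
    ((∀ i j : Fin n, i ≠ j → ζ (e i) (e j) = 0) ∧
      (∀ i : Fin n, (i : ℕ) < n - 1 →
        ζ (e i) (e i) = (1 / 2 : ℝ) •
          ζ (e ⟨n - 1, by omega⟩) (e ⟨n - 1, by omega⟩))) := by
  obtain ⟨m, rfl⟩ : ∃ m, n = m + 1 := ⟨n - 1, by omega⟩
  have hm : (0 : ℝ) < m := by
    have : 0 < m := by omega
    exact_mod_cast this
  have core := casorati_core (fun i j => ζ (e i) (e j)) (fun i j => hζ _ _)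
  have ht : 2 * τ = ‖∑ i, ζ (e i) (e i)‖ ^ 2 - ∑ i, ∑ j, ‖ζ (e i) (e j)‖ ^ 2 := by
    rw [hτ, casorati_two_tau (fun i j => T (e i) (e j) (e j) (e i))]
    · simp only [hT]
      simp only [Finset.sum_sub_distrib]
      congr 1
      · rw [← real_inner_self_eq_norm_sq, sum_inner]
        simp only [inner_sum]
      · refine Finset.sum_congr rfl fun i _ => Finset.sum_congr rfl fun j _ => ?_
        rw [hζ (e j) (e i), real_inner_self_eq_norm_sq]
    · intro i j
      simp only [hT]
      rw [real_inner_comm, hζ (e j) (e i)]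
    · intro i
      simp only [hT]
      ring
  rw [casorati_filter] at hCP
  simp only [casorati_filter] at hCP
  have hR : (∀ i : Fin (m + 1), (i : ℕ) < m + 1 - 1 → ζ (e i) (e i) = (1 / 2 : ℝ) •
      ζ (e ⟨m + 1 - 1, by omega⟩) (e ⟨m + 1 - 1, by omega⟩)) ↔
      ∀ i : Fin m, ζ (e i.castSucc) (e i.castSucc) = (1 / 2 : ℝ) •
        ζ (e (Fin.last m)) (e (Fin.last m)) := by
    constructor
    · intro h i
      exact h i.castSucc (by simp)
    · intro h i hi
      exact h ⟨i, by omega⟩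
  rw [hR, ← core, ht, hC, hCP]
  push_cast
  rw [add_sub_cancel_right]
  set S := ∑ i, ∑ j, ‖ζ (e i) (e j)‖ ^ 2
  set P := ∑ i : Fin m, ∑ j : Fin m, ‖ζ (e i.castSucc) (e j.castSucc)‖ ^ 2
  set H := ‖∑ i, ζ (e i) (e i)‖ ^ 2
  have hm1 : (0 : ℝ) < m + 1 := by positivity
  rw [div_eq_iff (by positivity)]
  have : (1 / 2 * (1 / ((m : ℝ) + 1) * S) + ((m : ℝ) + 1 + 1) / (2 * ((m : ℝ) + 1)) *
      (1 / (m : ℝ) * P)) * (((m : ℝ) + 1) * m) = m / 2 * S + (m + 2) / 2 * P := by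
    field_simp
    ring
  rw [this]
  constructor <;> intro h <;> linarith
end

section
/- Let V be an n-dimensional real inner product space (n ≥ 2), W a real inner product space, ζ : V × V → W a symmetric bilinear map, and T the tensor defined by the algebraic Gauss equation. Then for every orthonormal basis (e_1,…,e_n) of V, writing ζ_{ij} = ζ(e_i,e_j), τ_T = Σ_{1≤i<j≤n} T(e_i,e_j,e_j,e_i), C^{T,ζ} = (1/n) Σ_{i,j=1}^n ‖ζ_{ij}‖², and C^{T,ζ}(Π_{n−1}) = (1/(n−1)) Σ_{i,j=1}^{n−1} ‖ζ_{ij}‖² for the hyperplane Π_{n−1} spanned by e_1,…,e_{n−1}, one has 2τ_T/(n(n−1)) ≤ 2 C^{T,ζ} − ((2n−1)/(2n)) C^{T,ζ}(Π_{n−1}). In particular, the T-normalized scalar curvature (τ_T)_{Nor} = 2τ_T/(n(n−1)) is bounded above by the algebraic Casorati curvature δ̂_{C^{T,ζ}}(n−1) = 2C^{T,ζ} − ((2n−1)/(2n)) sup over hyperplanes of C^{T,ζ}(Π_{n−1}). -/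
open RealInnerProductSpace

lemma two_mul_sum_lt {n : ℕ} (f : Fin n → Fin n → ℝ) (hs : ∀ i j, f i j = f j i)
    (hd : ∀ i, f i i = 0) :
    2 * (∑ i : Fin n, ∑ j : Fin n, if i < j then f i j else 0) = ∑ i, ∑ j, f i j := by
  have h1 : (∑ i : Fin n, ∑ j : Fin n, if i < j then f i j else 0)
      = ∑ i : Fin n, ∑ j : Fin n, if j < i then f i j else 0 := by
    rw [Finset.sum_comm]
    refine Finset.sum_congr rfl fun i _ => Finset.sum_congr rfl fun j _ => ?_
    rw [hs]
  rw [two_mul]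
  nth_rewrite 2 [h1]
  rw [← Finset.sum_add_distrib]
  refine Finset.sum_congr rfl fun i _ => ?_
  rw [← Finset.sum_add_distrib]
  refine Finset.sum_congr rfl fun j _ => ?_
  rcases lt_trichotomy i j with h | h | h
  · simp [h, h.not_gt]
  · subst h; simp [hd]
  · simp [h, h.not_gt]

lemma norm_sq_sum_add_le {W : Type*} [NormedAddCommGroup W] {m : ℕ} (hm : 1 ≤ m)
    (x : Fin m → W) (y : W) :
    ‖∑ i, x i + y‖ ^ 2 ≤ (2 * (m : ℝ) + 1) * ((∑ i, ‖x i‖ ^ 2) / 2 + ‖y‖ ^ 2) := by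
  have hm' : (1 : ℝ) ≤ m := by exact_mod_cast hm
  have hn : ‖∑ i, x i + y‖ ≤ (∑ i, ‖x i‖) + ‖y‖ :=
    (norm_add_le _ _).trans (by gcongr; exact norm_sum_le _ _)
  have ha : (∑ i, ‖x i‖) ^ 2 ≤ m * ∑ i, ‖x i‖ ^ 2 := by
    simpa using sq_sum_le_card_mul_sum_sq (s := Finset.univ) (f := fun i => ‖x i‖)
  have h2 : ‖∑ i, x i + y‖ ^ 2 ≤ ((∑ i, ‖x i‖) + ‖y‖) ^ 2 := by gcongr
  refine h2.trans ?_
  generalize (∑ i, ‖x i‖) = a at *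
  generalize (∑ i, ‖x i‖ ^ 2) = Q at *
  generalize ‖y‖ = b at *
  have h3 : 2 * a * b ≤ Q / 2 + 2 * m * b ^ 2 := by
    have : (m : ℝ) * (2 * a * b) ≤ m * (Q / 2 + 2 * m * b ^ 2) := by
      nlinarith [sq_nonneg (a - 2 * m * b)]
    exact le_of_mul_le_mul_left this (by linarith)
  nlinarith

/-- STATEMENT 12: The normalized `T`-scalar curvature satisfies
`2τ_T/(n(n−1)) ≤ 2 C^{T,ζ} − ((2n−1)/(2n)) C^{T,ζ}(P_{n−1})` for every
orthonormal basis, where `P_{n−1}` is the hyperplane spanned by `e_1,…,e_{n−1}`. -/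
theorem algebraic_casorati_inequality_delta_hat
    {V W : Type*} [NormedAddCommGroup V] [InnerProductSpace ℝ V]
    [FiniteDimensional ℝ V] [NormedAddCommGroup W] [InnerProductSpace ℝ W]
    (n : ℕ) (hn : 2 ≤ n) (e : OrthonormalBasis (Fin n) ℝ V)
    (ζ : V →ₗ[ℝ] V →ₗ[ℝ] W) (hζ : ∀ X Y : V, ζ X Y = ζ Y X)
    (T : V → V → V → V → ℝ)
    (hT : ∀ X Y Z W' : V, T X Y Z W' = ⟪ζ X W', ζ Y Z⟫ - ⟪ζ X Z, ζ Y W'⟫)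
    (τ C CP : ℝ)
    (hτ : τ = ∑ i : Fin n, ∑ j : Fin n,
        if i < j then T (e i) (e j) (e j) (e i) else 0)
    (hC : C = (1 / (n : ℝ)) * ∑ i : Fin n, ∑ j : Fin n, ‖ζ (e i) (e j)‖ ^ 2)
    (hCP : CP = (1 / ((n : ℝ) - 1)) *
        ∑ i ∈ Finset.univ.filter (fun i : Fin n => (i : ℕ) < n - 1),
          ∑ j ∈ Finset.univ.filter (fun j : Fin n => (j : ℕ) < n - 1),
            ‖ζ (e i) (e j)‖ ^ 2) :
    2 * τ / ((n : ℝ) * ((n : ℝ) - 1)) ≤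
      2 * C - ((2 * (n : ℝ) - 1) / (2 * (n : ℝ))) * CP := by
  obtain ⟨m, rfl⟩ : ∃ m, n = m + 1 := ⟨n - 1, by omega⟩
  have hm : 1 ≤ m := by omega
  have hm' : (1 : ℝ) ≤ m := by exact_mod_cast hm
  set z : Fin (m + 1) → Fin (m + 1) → W := fun i j => ζ (e i) (e j) with hz
  have hsym : ∀ i j, z i j = z j i := fun i j => hζ _ _
  set S : ℝ := ∑ i, ∑ j, ‖z i j‖ ^ 2 with hS
  set P : ℝ := ∑ i : Fin m, ∑ j : Fin m, ‖z i.castSucc j.castSucc‖ ^ 2 with hP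
  have hC' : C = 1 / ((m : ℝ) + 1) * S := by rw [hC]; push_cast; rfl
  have hCP' : CP = 1 / (m : ℝ) * P := by
    rw [hCP]
    simp [Finset.sum_filter, Fin.sum_univ_castSucc, hP, hz]
  have hτ' : 2 * τ = ‖∑ i, z i i‖ ^ 2 - S := by
    have h := two_mul_sum_lt (fun i j => ⟪z i i, z j j⟫ - ‖z i j‖ ^ 2)
      (fun i j => by rw [real_inner_comm, hsym i j]) (fun i => by simp)
    have e1 : τ = ∑ i : Fin (m + 1), ∑ j : Fin (m + 1),
        if i < j then (⟪z i i, z j j⟫ - ‖z i j‖ ^ 2) else 0 := by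
      rw [hτ]
      refine Finset.sum_congr rfl fun i _ => Finset.sum_congr rfl fun j _ => ?_
      rw [hT, hζ (e j) (e i), real_inner_self_eq_norm_sq]
    rw [e1, h, ← real_inner_self_eq_norm_sq, sum_inner]
    simp only [inner_sum, Finset.sum_sub_distrib, hS]
  have hH := norm_sq_sum_add_le hm (fun i : Fin m => z i.castSucc i.castSucc)
    (z (Fin.last m) (Fin.last m))
  rw [← Fin.sum_univ_castSucc (fun i => z i i)] at hH
  have hD : ∑ i : Fin m, ‖z i.castSucc i.castSucc‖ ^ 2 ≤ P :=
    Finset.sum_le_sum fun i _ =>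
      Finset.single_le_sum (f := fun j : Fin m => ‖z i.castSucc j.castSucc‖ ^ 2)
        (fun j _ => by positivity) (Finset.mem_univ i)
  have hSP : P + ‖z (Fin.last m) (Fin.last m)‖ ^ 2 ≤ S := by
    simp only [hS, hP, Fin.sum_univ_castSucc, Finset.sum_add_distrib]
    have h1 : 0 ≤ ∑ i : Fin m, ‖z i.castSucc (Fin.last m)‖ ^ 2 := by positivity
    have h2 : 0 ≤ ∑ i : Fin m, ‖z (Fin.last m) i.castSucc‖ ^ 2 := by positivity
    linarith
  have key : ‖∑ i, z i i‖ ^ 2 ≤ (2 * (m : ℝ) + 1) * (S - P / 2) :=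
    hH.trans (mul_le_mul_of_nonneg_left (by linarith) (by positivity))
  rw [hτ', hC', hCP']
  push_cast
  have hm0 : (0 : ℝ) < m := by linarith
  rw [add_sub_cancel_right, div_le_iff₀ (by positivity)]
  have : (2 * (1 / ((m : ℝ) + 1) * S) -
      (2 * ((m : ℝ) + 1) - 1) / (2 * ((m : ℝ) + 1)) * (1 / (m : ℝ) * P)) * (((m : ℝ) + 1) * m)
      = 2 * m * S - (2 * m + 1) / 2 * P := by
    field_simp
    ring
  rw [this]
  linarith
end
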